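/- For nonempty subsets S, T ⊆ Ω: if S ∩ T ≠ ∅ then C(D_S ∪ D_T) = D_{S∩T}, and if S ∩ T = ∅ then C(D_S ∪ D_T) = L(Ω). That is, combination of the coherent sets D_S and D_T corresponds to intersection of the underlying sets. -/

import Mathlib

open Set

universe u

/-- The set of gambles on `Ω`: bounded real-valued functions. -/
def Gmb (Ω : Type u) : Set (Ω → ℝ) := {f | ∃ B : ℝ, ∀ ω, |f ω| ≤ B}

/-- `L⁺(Ω)`: non-negative, non-vanishing gambles. -/
def GmbPos (Ω : Type u) : Set (Ω → ℝ) :=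
  {f | f ∈ Gmb Ω ∧ (∀ ω, 0 ≤ f ω) ∧ f ≠ 0}

/-- Coherent set of gambles. -/
def Coherent {Ω : Type u} (D : Set (Ω → ℝ)) : Prop :=
  D ⊆ Gmb Ω ∧ GmbPos Ω ⊆ D ∧ (0 : Ω → ℝ) ∉ D ∧
    (∀ f ∈ D, ∀ g ∈ D, f + g ∈ D) ∧
    (∀ f ∈ D, ∀ c : ℝ, 0 < c → c • f ∈ D)

/-- Maximal coherent set of gambles: no coherent set properly contains it. -/
def MaxCoh {Ω : Type u} (M : Set (Ω → ℝ)) : Prop :=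
  Coherent M ∧ ∀ D : Set (Ω → ℝ), Coherent D → M ⊆ D → D = M

/-- Membership in `Φ(Ω)`: coherent sets together with `L(Ω)`. -/
def PhiMem {Ω : Type u} (D : Set (Ω → ℝ)) : Prop :=
  Coherent D ∨ D = Gmb Ω

/-- The closure operator `C` on sets of gambles. -/
def Cl {Ω : Type u} (A : Set (Ω → ℝ)) : Set (Ω → ℝ) :=
  ⋂₀ {D | PhiMem D ∧ A ⊆ D}

/-- Order on partitions (as equivalence relations): `ple x y` iff `𝒫x ≤ 𝒫y`,
i.e. `y` refines `x`. -/
def ple {Ω : Type u} (x y : Setoid Ω) : Prop := ∀ a b : Ω, y.r a b → x.r a b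

/-- Join of two partitions: the relation is the conjunction. -/
def pjoin {Ω : Type u} (x y : Setoid Ω) : Setoid Ω :=
  ⟨fun a b => x.r a b ∧ y.r a b,
    ⟨fun a => ⟨x.iseqv.refl a, y.iseqv.refl a⟩,
     fun h => ⟨x.iseqv.symm h.1, y.iseqv.symm h.2⟩,
     fun h h' => ⟨x.iseqv.trans h.1 h'.1, y.iseqv.trans h.2 h'.2⟩⟩⟩

/-- Conditional independence of partitions: blocks are equivalence classes,
`B1 ∩ B ≠ ∅` and `B2 ∩ B ≠ ∅` imply `B1 ∩ B2 ∩ B ≠ ∅`. -/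
def CondIndep {Ω : Type u} (p1 p2 p : Setoid Ω) : Prop :=
  ∀ a b c : Ω, (∃ u, p1.r a u ∧ p.r c u) → (∃ v, p2.r b v ∧ p.r c v) →
    ∃ w, p1.r a w ∧ p2.r b w ∧ p.r c w

/-- Saturation operator of a partition. -/
def sat {Ω : Type u} (x : Setoid Ω) (S : Set Ω) : Set Ω :=
  {ω | ∃ ω' ∈ S, x.r ω ω'}

/-- `L_x`: the `x`-measurable gambles. -/
def Meas {Ω : Type u} (x : Setoid Ω) : Set (Ω → ℝ) :=
  {f | f ∈ Gmb Ω ∧ ∀ a b : Ω, x.r a b → f a = f b}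

/-- Extraction operator `ε_x`. -/
def eps {Ω : Type u} (x : Setoid Ω) (D : Set (Ω → ℝ)) : Set (Ω → ℝ) :=
  Cl (D ∩ Meas x)

/-- `At(D)`: maximal coherent sets dominating `D`. -/
def Atoms {Ω : Type u} (D : Set (Ω → ℝ)) : Set (Set (Ω → ℝ)) :=
  {M | MaxCoh M ∧ D ⊆ M}

/-- `D_S`: the coherent set of gambles associated to a set `S ⊆ Ω`. -/
def DS {Ω : Type u} (S : Set Ω) : Set (Ω → ℝ) :=
  {f | f ∈ Gmb Ω ∧ 0 < sInf (f '' S)} ∪ GmbPos Ω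

/-- `posi(K)`: positive linear hull. -/
def posi {Ω : Type u} (K : Set (Ω → ℝ)) : Set (Ω → ℝ) :=
  {g | ∃ r : ℕ, 1 ≤ r ∧ ∃ (lam : Fin r → ℝ) (f : Fin r → (Ω → ℝ)),
    (∀ j, 0 < lam j) ∧ (∀ j, f j ∈ K) ∧ g = ∑ j, lam j • f j}

lemma gmb_add {Ω : Type u} {f g : Ω → ℝ} (hf : f ∈ Gmb Ω) (hg : g ∈ Gmb Ω) : f + g ∈ Gmb Ω := by
  obtain ⟨A, hA⟩ := hf
  obtain ⟨B, hB⟩ := hg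
  exact ⟨A + B, fun ω => (abs_add_le _ _).trans (add_le_add (hA ω) (hB ω))⟩

lemma gmb_smul {Ω : Type u} {f : Ω → ℝ} (hf : f ∈ Gmb Ω) {c : ℝ} (hc : 0 < c) : c • f ∈ Gmb Ω := by
  obtain ⟨A, hA⟩ := hf
  refine ⟨c * A, fun ω => ?_⟩
  simp only [Pi.smul_apply, smul_eq_mul, abs_mul, abs_of_pos hc]
  exact mul_le_mul_of_nonneg_left (hA ω) hc.le

lemma mem_DS_iff {Ω : Type u} {S : Set Ω} (hS : S.Nonempty) (f : Ω → ℝ) :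
    f ∈ DS S ↔ f ∈ Gmb Ω ∧ ((∃ e : ℝ, 0 < e ∧ ∀ ω ∈ S, e ≤ f ω) ∨ ((∀ ω, 0 ≤ f ω) ∧ f ≠ 0)) := by
  constructor
  · rintro (⟨⟨B, hB⟩, h⟩ | ⟨h1, h2⟩)
    · refine ⟨⟨B, hB⟩, Or.inl ⟨_, h, fun ω hω => csInf_le ⟨-B, ?_⟩ ⟨ω, hω, rfl⟩⟩⟩
      rintro _ ⟨w, _, rfl⟩
      exact (abs_le.1 (hB w)).1
    · exact ⟨h1, Or.inr h2⟩
  · rintro ⟨h1, ⟨e, he, h⟩ | h⟩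
    · refine Or.inl ⟨h1, he.trans_le (le_csInf (hS.image f) ?_)⟩
      rintro _ ⟨w, hw, rfl⟩
      exact h w hw
    · exact Or.inr ⟨h1, h⟩

lemma DS_coherent {Ω : Type u} {S : Set Ω} (hS : S.Nonempty) : Coherent (DS S) := by
  refine ⟨fun f hf => ((mem_DS_iff hS f).1 hf).1, fun f hf => Or.inr hf, ?_, ?_, ?_⟩
  · rw [mem_DS_iff hS]
    rintro ⟨-, ⟨e, he, h⟩ | ⟨-, h⟩⟩
    · obtain ⟨w, hw⟩ := hS
      have := h w hw
      simp only [Pi.zero_apply] at this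
      linarith
    · exact h rfl
  · intro f hf g hg
    rw [mem_DS_iff hS] at *
    obtain ⟨hf, hf'⟩ := hf
    obtain ⟨hg, hg'⟩ := hg
    refine ⟨gmb_add hf hg, ?_⟩
    rcases hf' with ⟨e, he, h⟩ | ⟨h, hn⟩ <;> rcases hg' with ⟨d, hd, k⟩ | ⟨k, kn⟩
    · exact Or.inl ⟨e + d, by linarith, fun w hw => add_le_add (h w hw) (k w hw)⟩
    · exact Or.inl ⟨e, he, fun w hw => by have := h w hw; have := k w; simp only [Pi.add_apply]; linarith⟩
    · exact Or.inl ⟨d, hd, fun w hw => by have := k w hw; have := h w; simp only [Pi.add_apply]; linarith⟩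
    · refine Or.inr ⟨fun w => add_nonneg (h w) (k w), fun h0 => hn ?_⟩
      funext w
      have h1 := congrFun h0 w
      have := h w
      have := k w
      simp only [Pi.add_apply, Pi.zero_apply] at *
      linarith
  · intro f hf c hc
    rw [mem_DS_iff hS] at *
    obtain ⟨hf, hf'⟩ := hf
    refine ⟨gmb_smul hf hc, ?_⟩
    rcases hf' with ⟨e, he, h⟩ | ⟨h, hn⟩
    · exact Or.inl ⟨c * e, mul_pos hc he, fun w hw => mul_le_mul_of_nonneg_left (h w hw) hc.le⟩
    · exact Or.inr ⟨fun w => mul_nonneg hc.le (h w), smul_ne_zero hc.ne' hn⟩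

lemma DS_anti {Ω : Type u} {S T : Set Ω} (hS : S.Nonempty) (hST : S ⊆ T) : DS T ⊆ DS S := by
  intro f hf
  rw [mem_DS_iff (hS.mono hST)] at hf
  rw [mem_DS_iff hS]
  exact ⟨hf.1, hf.2.imp (fun ⟨e, he, h⟩ => ⟨e, he, fun w hw => h w (hST hw)⟩) id⟩

lemma split_mem {Ω : Type u} {S T : Set Ω} (hS : S.Nonempty) (hT : T.Nonempty)
    {D : Set (Ω → ℝ)} (hD : Coherent D) (h : DS S ∪ DS T ⊆ D) {f : Ω → ℝ} (hf : f ∈ Gmb Ω)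
    {e : ℝ} (he : 0 < e) (hfe : ∀ ω ∈ S ∩ T, e ≤ f ω) : f ∈ D := by
  classical
  obtain ⟨B, hB⟩ := hf
  have hB0 : ∀ w, |f w - e / 2| ≤ B + e / 2 := fun w => by
    have := abs_le.1 (hB w)
    rw [abs_le]
    constructor <;> linarith
  have hE : ∀ w, |e / 2| ≤ B + e / 2 := fun w => by
    have := (abs_nonneg _).trans (hB w)
    rw [abs_of_pos (by linarith)]
    linarith
  let g : Ω → ℝ := fun w => if w ∈ S then e / 2 else f w - e / 2
  let k : Ω → ℝ := fun w => if w ∈ S then f w - e / 2 else e / 2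
  have hgk : f = g + k := by
    funext w
    by_cases hw : w ∈ S <;> simp [g, k, hw]
  rw [hgk]
  refine hD.2.2.2.1 g (h (Or.inl ?_)) k (h (Or.inr ?_))
  · rw [mem_DS_iff hS]
    refine ⟨⟨B + e / 2, fun w => ?_⟩, Or.inl ⟨e / 2, by linarith, fun w hw => by simp [g, hw]⟩⟩
    by_cases hw : w ∈ S
    · simpa only [g, hw, if_true] using hE w
    · simpa only [g, hw, if_false] using hB0 w
  · rw [mem_DS_iff hT]
    refine ⟨⟨B + e / 2, fun w => ?_⟩, Or.inl ⟨e / 2, by linarith, fun w hw => ?_⟩⟩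
    · by_cases hw : w ∈ S
      · simpa only [k, hw, if_true] using hB0 w
      · simpa only [k, hw, if_false] using hE w
    · by_cases hs : w ∈ S
      · have := hfe w ⟨hs, hw⟩
        simp only [k, hs, if_true]
        linarith
      · simp [k, hs]

theorem stmt12 {Ω : Type u} [Nonempty Ω] (S T : Set Ω) (hS : S.Nonempty) (hT : T.Nonempty) :
    ((S ∩ T).Nonempty → Cl (DS S ∪ DS T) = DS (S ∩ T)) ∧
    (S ∩ T = ∅ → Cl (DS S ∪ DS T) = Gmb Ω) := by
  have hG : ∀ {U : Set Ω}, U.Nonempty → DS U ⊆ Gmb Ω := fun hU => (DS_coherent hU).1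
  constructor
  · intro hST
    apply Subset.antisymm
    · exact sInter_subset_of_mem ⟨Or.inl (DS_coherent hST),
        union_subset (DS_anti hST inter_subset_left) (DS_anti hST inter_subset_right)⟩
    · rintro f hf D ⟨hD | rfl, hsub⟩
      · rcases (mem_DS_iff hST f).1 hf with ⟨h1, ⟨e, he, h⟩ | h⟩
        · exact split_mem hS hT hD hsub h1 he h
        · exact hD.2.1 ⟨h1, h⟩
      · exact hG hST hf
  · intro hST
    apply Subset.antisymm
    · exact sInter_subset_of_mem ⟨Or.inr rfl, union_subset (hG hS) (hG hT)⟩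
    · rintro f hf D ⟨hD | rfl, hsub⟩
      · exact split_mem hS hT hD hsub hf one_pos (by simp [hST])
      · exact hf
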